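/- In the first construction, if a state [g, p] satisfies the simulation invariant for a configuration α whose state is neither accept nor reject, then the state s([g, p]) obtained by one state transition step satisfies the simulation invariant for the next configuration of α; in particular, ψ⁻¹(s([g, p])) is the next configuration of α. -/

import Mathlib

/-!
Under the invariant the particle at list position `j` carries the index `j`, so exactly one
particle, the one at the head, has index `m`. The neighborhood is empty, hence the step consists
of a single nontrivial call of `e1`, at that particle (`interPhase_nil`, `evolvePhase_e1`). The
accumulators `Δq = start` and `d = -1` are least elements, so the maxima taken there return the
new state and the move prescribed by `δ`.

If the head stays within the stored cells, only the symbol under the head changes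
(`tapeOf_update`). Otherwise it moves right from the last stored cell, the list ends at the head
particle, and the new particle is an explicit blank with the next index, which does not change the
tape (`tapeOf_append_blank`). On the first cell the head reads the end marker, which is kept and
forces a move to the right; so the truncation `max 1` in `eg1` never takes effect.
-/

/-- A deterministic one-tape Turing machine following Kozen:
states `Q` with distinguished `start`, `accept`, `reject`; tape alphabet `Γ`
with end marker `endm`, blank symbol `blank`, and input alphabet `inp ⊆ Γ`;
transition function `δ : Q → Γ → Q × Γ × ℤ` whose direction component lies
in `{-1, +1}`, which never overwrites the end marker (and moves right on it),
and for which `accept` and `reject` are absorbing. -/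
structure KTM (Q Γ : Type) where
  start : Q
  accept : Q
  reject : Q
  endm : Γ
  blank : Γ
  inp : Set Γ
  δ : Q → Γ → Q × Γ × ℤ
  accept_ne_reject : accept ≠ reject
  endm_not_inp : endm ∉ inp
  blank_not_inp : blank ∉ inp
  dir_valid : ∀ q a, (δ q a).2.2 = -1 ∨ (δ q a).2.2 = 1
  endm_rule : ∀ q, (δ q endm).2.1 = endm ∧ (δ q endm).2.2 = 1
  accept_absorb : ∀ a, (δ accept a).1 = accept
  reject_absorb : ∀ a, (δ reject a).1 = reject

/-- A configuration of a Turing machine: the state, the semi-infinite tape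
(positions `1, 2, 3, …`), and the head position. -/
abbrev Config (Q Γ : Type) : Type := Q × (ℕ → Γ) × ℕ

/-- The semi-infinite tape `x ␣^ω` determined by the finite string `x`
(1-based positions). -/
def tapeOf {Γ : Type} (blank : Γ) (x : List Γ) : ℕ → Γ := fun j => x.getD (j - 1) blank

namespace KTM
variable {Q Γ : Type}

/-- The next-configuration function of a Turing machine. -/
def nextConfig (T : KTM Q Γ) (c : Config Q Γ) : Config Q Γ :=
  ((T.δ c.1 (c.2.1 c.2.2)).1,
   Function.update c.2.1 c.2.2 (T.δ c.1 (c.2.1 c.2.2)).2.1,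
   ((c.2.2 : ℤ) + (T.δ c.1 (c.2.1 c.2.2)).2.2).toNat)

/-- The start configuration on input string `y`: state `start`,
tape `⊢ y ␣^ω`, head on the first cell. -/
def startConfig (T : KTM Q Γ) (y : List Γ) : Config Q Γ :=
  (T.start, tapeOf T.blank (T.endm :: y), 1)

end KTM

section PM
variable {P G : Type}

/-- One pairwise particle interaction: replace the `j`-th and `k`-th entries of
the particle tuple by the two components of `i g p_j p_k`. -/
def interOne (i : G → P → P → P × P) (g : G) (p : List P) (j k : ℕ) : List P :=
  match p[j]?, p[k]? with
  | some pj, some pk => (p.set j (i g pj pk).1).set k (i g pj pk).2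
  | _, _ => p

/-- Interaction of the `j`-th particle with all its neighbors (as listed by the
neighborhood function `u`), in order. -/
def interNbh (u : G × List P → ℕ → List ℕ) (i : G → P → P → P × P)
    (g : G) (p : List P) (j : ℕ) : List P :=
  (u (g, p) j).foldl (fun q k => interOne i g q j k) p

/-- The interaction phase of a particle method state transition step:
all particles interact with all their respective neighbors, in order. -/
def interPhase (u : G × List P → ℕ → List ℕ) (i : G → P → P → P × P)
    (g : G) (p : List P) : List P :=
  (List.range p.length).foldl (fun q j => interNbh u i g q j) p

/-- The evolution phase of a particle method state transition step: the global
variable is the left fold of `₁e` over the particles, and the new particle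
tuple is the concatenation of the `₂e` outputs of these same calls. -/
def evolvePhase (e : G → P → G × List P) (g : G) (p : List P) : G × List P :=
  p.foldl (fun acc pj => ((e acc.1 pj).1, acc.2 ++ (e acc.1 pj).2)) (g, [])

/-- One state transition step `s` of a particle method. -/
def pmStep (u : G × List P → ℕ → List ℕ) (i : G → P → P → P × P)
    (e : G → P → G × List P) (ge : G → G) : G × List P → G × List P :=
  fun st =>
    (ge (evolvePhase e st.1 (interPhase u i st.1 st.2)).1,
     (evolvePhase e st.1 (interPhase u i st.1 st.2)).2)

end PM

section C1
variable {Q Γ : Type}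

/-- Particle space of the first construction: a cell index and a tape symbol. -/
abbrev P1 (Γ : Type) : Type := ℕ × Γ

/-- Global-variable space of the first construction:
`(q, Δq, d, m, M)`. -/
abbrev G1 (Q : Type) : Type := Q × Q × ℤ × ℕ × ℕ

/-- Evolve function of the first construction. -/
def e1 [LinearOrder Q] (T : KTM Q Γ) (g : G1 Q) (p : P1 Γ) : G1 Q × List (P1 Γ) :=
  if p.1 = g.2.2.2.1 then
    if (g.2.2.2.1 : ℤ) + (T.δ g.1 p.2).2.2 ≤ (g.2.2.2.2 : ℤ) then
      ((g.1, max g.2.1 (T.δ g.1 p.2).1, max g.2.2.1 (T.δ g.1 p.2).2.2, g.2.2.2.1, g.2.2.2.2),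
       [(p.1, (T.δ g.1 p.2).2.1)])
    else
      ((g.1, max g.2.1 (T.δ g.1 p.2).1, max g.2.2.1 (T.δ g.1 p.2).2.2, g.2.2.2.1, g.2.2.2.2),
       [(p.1, (T.δ g.1 p.2).2.1), (p.1 + 1, T.blank)])
  else (g, [p])

/-- Evolve function of the global variable of the first construction. -/
def eg1 (T : KTM Q Γ) (g : G1 Q) : G1 Q :=
  if (g.2.2.2.2 : ℤ) < (g.2.2.2.1 : ℤ) + g.2.2.1 then
    (g.2.1, T.start, -1, ((g.2.2.2.1 : ℤ) + g.2.2.1).toNat, g.2.2.2.2 + 1)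
  else
    (g.2.1, T.start, -1, max 1 ((g.2.2.2.1 : ℤ) + g.2.2.1).toNat, g.2.2.2.2)

/-- Translation `ψ` of the first construction, applied to a configuration
`(q, x ␣^ω, n)` given by a finite string `x`. -/
def psi1 (T : KTM Q Γ) (q : Q) (x : List Γ) (n : ℕ) : G1 Q × List (P1 Γ) :=
  ((q, T.start, -1, n, x.length),
   (List.range x.length).map fun j => (j + 1, x.getD j T.blank))

/-- Back-translation `ψ⁻¹` of the first construction. -/
def psi1inv (T : KTM Q Γ) (st : G1 Q × List (P1 Γ)) : Config Q Γ :=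
  (st.1.1, tapeOf T.blank (st.2.map Prod.snd), st.1.2.2.2.1)

/-- Simulation invariant of the first construction: the back-translation of the
state is `α`, `M = |p|`, `m ≤ M`, `m` is the head position of `α`, `d = -1`,
`Δq = start`, and `k_j = j` for every particle. -/
def SimInv1 (T : KTM Q Γ) (st : G1 Q × List (P1 Γ)) (α : Config Q Γ) : Prop :=
  psi1inv T st = α ∧
  st.1.2.2.2.2 = st.2.length ∧
  st.1.2.2.2.1 ≤ st.1.2.2.2.2 ∧
  st.1.2.2.2.1 = α.2.2 ∧
  st.1.2.2.1 = -1 ∧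
  st.1.2.1 = T.start ∧
  ∀ j : Fin st.2.length, (st.2.get j).1 = (j : ℕ) + 1

end C1

section C2
variable {Q Γ : Type}

/-- Particle space of the second construction: `(z, h, Δh, o, Δo, a)`. -/
abbrev P2 (Γ : Type) : Type := Γ × ℤ × ℤ × ℤ × ℤ × ℤ

/-- Global-variable space of the second construction: `(q, Δq)`. -/
abbrev G2 (Q : Type) : Type := Q × Q

/-- The tape symbol `z` of a particle of the second construction. -/
def zOf (p : P2 Γ) : Γ := p.1
/-- The head marker `h` of a particle of the second construction. -/
def hOf (p : P2 Γ) : ℤ := p.2.1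
/-- The head-change marker `Δh` of a particle of the second construction. -/
def dhOf (p : P2 Γ) : ℤ := p.2.2.1
/-- The last head-move direction `o` of a particle of the second construction. -/
def oOf (p : P2 Γ) : ℤ := p.2.2.2.1
/-- The next head-move direction `Δo` of a particle of the second construction. -/
def doOf (p : P2 Γ) : ℤ := p.2.2.2.2.1
/-- The hand-over flag `a` of a particle of the second construction. -/
def aOf (p : P2 Γ) : ℤ := p.2.2.2.2.2

/-- Interact function of the second construction. -/
def i2 (T : KTM Q Γ) (g : G2 Q) (pj pk : P2 Γ) : P2 Γ × P2 Γ :=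
  if hOf pk = 1 ∧ ((hOf pj = -1 ∧ (T.δ g.1 pk.1).2.2 ≠ oOf pk) ∨
      (hOf pj = 0 ∧ (T.δ g.1 pk.1).2.2 = oOf pk)) then
    ((pj.1, hOf pj, 1, oOf pj, max (doOf pj) (T.δ g.1 pk.1).2.2, aOf pj), pk)
  else if hOf pj = 1 ∧ ((hOf pk = -1 ∧ (T.δ g.1 pj.1).2.2 ≠ oOf pj) ∨
      (hOf pk = 0 ∧ (T.δ g.1 pj.1).2.2 = oOf pj)) then
    ((pj.1, hOf pj, dhOf pj, oOf pj, doOf pj, 1), pk)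
  else (pj, pk)

/-- Evolve function of the second construction. -/
def e2 [LinearOrder Q] (T : KTM Q Γ) (g : G2 Q) (p : P2 Γ) : G2 Q × List (P2 Γ) :=
  if dhOf p = 1 then (g, [(p.1, 1, 0, doOf p, -1, 0)])
  else if dhOf p = 0 ∧ hOf p = -1 then (g, [(p.1, 0, 0, -1, -1, 0)])
  else if dhOf p = 0 ∧ hOf p = 1 ∧ aOf p = 1 then
    ((g.1, max g.2 (T.δ g.1 p.1).1), [((T.δ g.1 p.1).2.1, -1, 0, -1, -1, 0)])
  else if dhOf p = 0 ∧ hOf p = 1 ∧ aOf p = 0 then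
    ((g.1, max g.2 (T.δ g.1 p.1).1),
     [((T.δ g.1 p.1).2.1, -1, 0, -1, -1, 0), (T.blank, 1, 0, (T.δ g.1 p.1).2.2, -1, 0)])
  else (g, [p])

/-- Evolve function of the global variable of the second construction. -/
def eg2 (T : KTM Q Γ) (g : G2 Q) : G2 Q := (g.2, T.start)

/-- Neighborhood function of the second construction: the indices among
`(j-1, j+1)` that lie inside the particle tuple. -/
def u2 (st : G2 Q × List (P2 Γ)) (j : ℕ) : List ℕ :=
  (if 1 ≤ j then [j - 1] else []) ++ (if j + 1 < st.2.length then [j + 1] else [])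

/-- Stopping condition of the second construction. -/
def f2 [DecidableEq Q] (T : KTM Q Γ) (g : G2 Q) : Bool :=
  g.1 = T.reject ∨ g.1 = T.accept

/-- Translation `ψ` of the second construction, applied to a configuration
`(q, x ␣^ω, n)` given by a finite string `x`. -/
def psi2 (T : KTM Q Γ) (q : Q) (x : List Γ) (n : ℕ) : G2 Q × List (P2 Γ) :=
  ((q, T.start),
   (List.range x.length).map fun j =>
     (x.getD j T.blank, if j + 1 = n then 1 else if j + 1 = n + 1 then -1 else 0, 0, -1, -1, 0))

/-- Back-translation `ψ⁻¹` of the second construction: the head position is the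
unique (1-based) index of the particle with `h = 1`. -/
def psi2inv (T : KTM Q Γ) (st : G2 Q × List (P2 Γ)) : Config Q Γ :=
  (st.1.1, tapeOf T.blank (st.2.map fun p => p.1),
   st.2.findIdx (fun p => decide (hOf p = 1)) + 1)

/-- Simulation invariant of the second construction for a configuration `α`
with head position `n`: the back-translation of the state is `α`; the particle
at position `n` has `h = 1`, the particle at position `n - o_n` exists and has
`h = -1`, all other particles have `h = 0`; every particle has `Δh = 0`,
`Δo = -1`, and `a = 0`; and `Δq = start`. -/
def SimInv2 (T : KTM Q Γ) (st : G2 Q × List (P2 Γ)) (α : Config Q Γ) : Prop :=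
  psi2inv T st = α ∧
  ∃ hn : α.2.2 - 1 < st.2.length,
    hOf (st.2.get ⟨α.2.2 - 1, hn⟩) = 1 ∧
    (∃ k : Fin st.2.length,
      ((k : ℕ) + 1 : ℤ) = (α.2.2 : ℤ) - oOf (st.2.get ⟨α.2.2 - 1, hn⟩)) ∧
    (∀ j : Fin st.2.length,
      hOf (st.2.get j) =
        if (j : ℕ) + 1 = α.2.2 then 1
        else if ((j : ℕ) + 1 : ℤ) = (α.2.2 : ℤ) - oOf (st.2.get ⟨α.2.2 - 1, hn⟩) then -1
        else 0) ∧
    (∀ j : Fin st.2.length,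
      dhOf (st.2.get j) = 0 ∧ doOf (st.2.get j) = -1 ∧ aOf (st.2.get j) = 0) ∧
    st.1.2 = T.start

end C2

/-- With the empty neighborhood the interaction phase does nothing. -/
lemma interPhase_nil {P G : Type} (i : G → P → P → P × P) (g : G) (p : List P) :
    interPhase (fun _ _ => ([] : List ℕ)) i g p = p := by
  simp [interPhase, interNbh]

/-- Particles away from the head position `m` are copied and leave the global variable alone. -/
lemma foldl_e1_of_ne {Q Γ : Type} [LinearOrder Q] (T : KTM Q Γ) (g : G1 Q)
    (l : List (P1 Γ)) (acc : List (P1 Γ)) (h : ∀ a ∈ l, a.1 ≠ g.2.2.2.1) :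
    l.foldl (fun acc pj => ((e1 T acc.1 pj).1, acc.2 ++ (e1 T acc.1 pj).2)) (g, acc)
      = (g, acc ++ l) := by
  induction l generalizing acc with
  | nil => simp
  | cons a l ih =>
    have ha : e1 T g a = (g, [a]) := by simp [e1, h a]
    rw [List.foldl_cons, ha, ih _ fun b hb => h b (List.mem_cons_of_mem _ hb)]
    simp

/-- If no particle other than `a` sits at the head position, the evolution phase amounts to a
single call of `e1`, at `a`. -/
lemma evolvePhase_e1 {Q Γ : Type} [LinearOrder Q] (T : KTM Q Γ) (g : G1 Q)
    (l₁ l₂ : List (P1 Γ)) (a : P1 Γ) (h₁ : ∀ b ∈ l₁, b.1 ≠ g.2.2.2.1)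
    (h₂ : ∀ b ∈ l₂, b.1 ≠ g.2.2.2.1) :
    evolvePhase (e1 T) g (l₁ ++ a :: l₂)
      = ((e1 T g a).1, l₁ ++ (e1 T g a).2 ++ l₂) := by
  have hm : (e1 T g a).1.2.2.2.1 = g.2.2.2.1 := by
    unfold e1; split_ifs <;> rfl
  rw [evolvePhase, List.foldl_append, foldl_e1_of_ne T g l₁ [] h₁, List.foldl_cons,
    foldl_e1_of_ne T _ l₂ _ (by rw [hm]; exact h₂)]
  simp

/-- Overwriting the symbol behind a prefix of length `n` updates the tape at position `n + 1`.
Position `0` is not a cell, but `tapeOf` reads the first symbol there (`0 - 1 = 0`); the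
hypothesis `h0` makes the two sides agree at this junk position. -/
lemma tapeOf_update {Γ : Type} (b : Γ) (l₁ l₂ : List Γ) (z z' : Γ)
    (h0 : l₁ = [] → z' = z) :
    Function.update (tapeOf b (l₁ ++ z :: l₂)) (l₁.length + 1) z'
      = tapeOf b (l₁ ++ z' :: l₂) := by
  funext j
  by_cases hj : j = l₁.length + 1
  · subst hj
    simp [tapeOf]
  · rw [Function.update_of_ne hj]
    rcases l₁ with _ | ⟨c, l₁⟩
    · rw [h0 rfl]
    · have hj' : j - 1 ≠ (c :: l₁).length := by
        simp only [List.length_cons] at hj ⊢; omega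
      simp only [tapeOf, List.getD_eq_getElem?_getD]
      congr 1
      rcases lt_or_gt_of_ne hj' with h | h
      · rw [List.getElem?_append_left h, List.getElem?_append_left h]
      · rw [List.getElem?_append_right h.le, List.getElem?_append_right h.le]
        obtain ⟨k, hk⟩ := Nat.exists_eq_succ_of_ne_zero (Nat.sub_ne_zero_of_lt h)
        rw [hk]; simp

/-- A trailing explicit blank is invisible on the tape. -/
lemma tapeOf_append_blank {Γ : Type} (b : Γ) (l : List Γ) :
    tapeOf b (l ++ [b]) = tapeOf b l := by
  funext j
  simp only [tapeOf, List.getD_eq_getElem?_getD, List.getElem?_append]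
  split_ifs with h
  · rfl
  · rw [List.getElem?_eq_none (not_lt.mp h)]
    rcases (j - 1 - l.length) with _ | k <;> simp

/-- In the first construction (empty neighborhood, identity
interact function, evolve function `e1`, global evolve function `eg1`), if a
state `[g, p]` satisfies the simulation invariant for a configuration `α`
(with tape of the form `⊢x␣^ω` and head position `≥ 1`) whose state is neither
`accept` nor `reject`, then `s([g, p])` satisfies the simulation invariant for
the next configuration of `α`; in particular `ψ⁻¹(s([g, p]))` is the next
configuration of `α`. -/
theorem simInv1_step {Q Γ : Type} [LinearOrder Q] (T : KTM Q Γ)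
    (hstart : ∀ q : Q, T.start ≤ q)
    (st : G1 Q × List (P1 Γ)) (α : Config Q Γ)
    (hwf : ∃ x : List Γ, α.2.1 = tapeOf T.blank (T.endm :: x))
    (hpos : 1 ≤ α.2.2)
    (hinv : SimInv1 T st α)
    (hacc : α.1 ≠ T.accept) (hrej : α.1 ≠ T.reject) :
    SimInv1 T
      (pmStep (fun _ _ => ([] : List ℕ)) (fun _ pj pk => (pj, pk)) (e1 T) (eg1 T) st)
      (T.nextConfig α) ∧
    psi1inv T
      (pmStep (fun _ _ => ([] : List ℕ)) (fun _ pj pk => (pj, pk)) (e1 T) (eg1 T) st) =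
      T.nextConfig α := by
  refine and_iff_left_of_imp (fun h => h.1) |>.mpr ?_
  obtain ⟨⟨q, Δq, d, m, M⟩, p⟩ := st
  obtain ⟨rfl, hM, hmM, -, hd, hΔ, hk⟩ := hinv
  obtain ⟨x, hx⟩ := hwf
  simp only [psi1inv] at hM hmM hd hΔ hk hpos hx
  subst hM hd hΔ
  have hlt : m - 1 < p.length := by omega
  obtain ⟨l₁, ⟨k, z⟩, l₂, rfl, hl⟩ : ∃ l₁ a l₂, p = l₁ ++ a :: l₂ ∧ l₁.length = m - 1 :=
    ⟨p.take (m - 1), p[m - 1], p.drop m, by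
      conv_lhs => rw [← List.take_append_drop (m - 1) p, List.drop_eq_getElem_cons hlt]
      rw [Nat.sub_add_cancel hpos], by simp; omega⟩
  obtain rfl : m = l₁.length + 1 := by omega
  -- The particle indices, read off separately on the two sides of the head.
  have hk1 : ∀ (j : ℕ) (h : j < l₁.length), l₁[j].1 = j + 1 := fun j h => by
    have := hk ⟨j, by simp; omega⟩
    simpa [List.getElem_append_left h] using this
  have hkm : k = l₁.length + 1 := by
    have := hk ⟨l₁.length, by simp⟩
    simpa using this
  have hk2 : ∀ (j : ℕ) (h : j < l₂.length), l₂[j].1 = l₁.length + 1 + j + 1 := fun j h => by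
    have := hk ⟨l₁.length + 1 + j, by simp; omega⟩
    simp only [List.get_eq_getElem] at this
    rw [List.getElem_append_right (by omega)] at this
    simpa [show l₁.length + 1 + j - l₁.length = j + 1 by omega] using this
  subst hkm
  have hz : tapeOf T.blank (List.map Prod.snd (l₁ ++ (l₁.length + 1, z) :: l₂))
      (l₁.length + 1) = z := by
    simp [tapeOf]
  -- On the first cell the head reads the end marker.
  have hend : l₁ = [] → z = T.endm := by
    rintro rfl
    have := congrFun hx 1
    simpa [tapeOf] using this
  have hdir := T.dir_valid q z
  have hstep := evolvePhase_e1 T (q, T.start, -1, l₁.length + 1,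
      (l₁ ++ (l₁.length + 1, z) :: l₂).length) l₁ l₂ (l₁.length + 1, z)
    (fun b hb => by
      obtain ⟨j, h, rfl⟩ := List.getElem_of_mem hb
      rw [hk1 j h]; simp; omega)
    (fun b hb => by
      obtain ⟨j, h, rfl⟩ := List.getElem_of_mem hb
      rw [hk2 j h]; simp; omega)
  have htape := tapeOf_update T.blank (l₁.map Prod.snd) (l₂.map Prod.snd) z (T.δ q z).2.1
    (fun h => by
      rw [hend (List.map_eq_nil_iff.mp h)]; exact (T.endm_rule q).1)
  rw [List.length_map] at htape
  have hmax : max (-1) (T.δ q z).2.2 = (T.δ q z).2.2 := by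
    rcases hdir with h | h <;> rw [h] <;> norm_num
  -- The head cannot leave the tape on the left.
  have hleft : (T.δ q z).2.2 = -1 → 1 ≤ l₁.length := by
    intro h
    rcases l₁ with _ | ⟨c, l₁⟩
    · rw [hend rfl, (T.endm_rule q).2] at h
      norm_num at h
    · simp
  by_cases hgrow : ((l₁.length + 1 : ℕ) : ℤ) + (T.δ q z).2.2
      ≤ ((l₁ ++ (l₁.length + 1, z) :: l₂).length : ℤ)
  · have he : e1 T (q, T.start, -1, l₁.length + 1, (l₁ ++ (l₁.length + 1, z) :: l₂).length)
        (l₁.length + 1, z) = ((q, (T.δ q z).1, (T.δ q z).2.2, l₁.length + 1,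
          (l₁ ++ (l₁.length + 1, z) :: l₂).length), [(l₁.length + 1, (T.δ q z).2.1)]) := by
      rw [e1, if_pos rfl, if_pos hgrow]
      simp only [max_eq_right (hstart _), hmax]
    rw [he] at hstep
    have hhead : max 1 (((l₁.length + 1 : ℕ) : ℤ) + (T.δ q z).2.2).toNat
        = (((l₁.length + 1 : ℕ) : ℤ) + (T.δ q z).2.2).toNat := by
      rcases hdir with h | h
      · have := hleft h
        omega
      · omega
    have hpm : pmStep (fun _ _ => ([] : List ℕ)) (fun _ pj pk => (pj, pk)) (e1 T) (eg1 T)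
        ((q, T.start, -1, l₁.length + 1, (l₁ ++ (l₁.length + 1, z) :: l₂).length),
          l₁ ++ (l₁.length + 1, z) :: l₂)
        = (((T.δ q z).1, T.start, -1, (((l₁.length + 1 : ℕ) : ℤ) + (T.δ q z).2.2).toNat,
            (l₁ ++ (l₁.length + 1, z) :: l₂).length),
          l₁ ++ (l₁.length + 1, (T.δ q z).2.1) :: l₂) := by
      simp only [pmStep, interPhase_nil, hstep, eg1, not_lt.mpr hgrow, if_false, hhead]
      simp
    rw [hpm]
    refine ⟨?_, by simp, by dsimp only; omega, ?_, rfl, rfl, ?_⟩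
    · simp only [psi1inv, KTM.nextConfig, hz]
      simp only [List.map_append, List.map_cons, htape]
    · simp only [psi1inv, KTM.nextConfig, hz]
    · rintro ⟨j, hj⟩
      simp only [List.get_eq_getElem, List.getElem_append]
      split_ifs with h
      · exact hk1 j h
      · obtain ⟨i, rfl⟩ := Nat.exists_eq_add_of_le (not_lt.mp h)
        simp only [Nat.add_sub_cancel_left]
        rcases i with _ | i
        · rfl
        · rw [List.getElem_cons_succ, hk2]
          omega
  -- The head moves right from the last cell, so nothing follows the head particle.
  · have hd1 : (T.δ q z).2.2 = 1 := by
      rcases hdir with h | h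
      · omega
      · exact h
    obtain rfl : l₂ = [] := by
      rw [hd1] at hgrow
      apply List.eq_nil_of_length_eq_zero
      simp only [List.length_append, List.length_cons] at hgrow
      omega
    have he : e1 T (q, T.start, -1, l₁.length + 1, (l₁ ++ [(l₁.length + 1, z)]).length)
        (l₁.length + 1, z) = ((q, (T.δ q z).1, (T.δ q z).2.2, l₁.length + 1,
          (l₁ ++ [(l₁.length + 1, z)]).length),
          [(l₁.length + 1, (T.δ q z).2.1), (l₁.length + 1 + 1, T.blank)]) := by
      rw [e1, if_pos rfl, if_neg hgrow]
      simp only [max_eq_right (hstart _), hmax]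
    rw [he] at hstep
    have hpm : pmStep (fun _ _ => ([] : List ℕ)) (fun _ pj pk => (pj, pk)) (e1 T) (eg1 T)
        ((q, T.start, -1, l₁.length + 1, (l₁ ++ [(l₁.length + 1, z)]).length),
          l₁ ++ [(l₁.length + 1, z)])
        = (((T.δ q z).1, T.start, -1, (((l₁.length + 1 : ℕ) : ℤ) + (T.δ q z).2.2).toNat,
            (l₁ ++ [(l₁.length + 1, z)]).length + 1),
          l₁ ++ [(l₁.length + 1, (T.δ q z).2.1), (l₁.length + 1 + 1, T.blank)]) := by
      simp only [pmStep, interPhase_nil, hstep, eg1, not_le.mp hgrow, if_true, List.append_nil]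
    rw [hpm]
    refine ⟨?_, by simp, by rw [hd1]; simp, ?_, rfl, rfl, ?_⟩
    · simp only [psi1inv, KTM.nextConfig, hz]
      simp only [List.map_append, List.map_cons, List.map_nil] at htape ⊢
      rw [htape, ← tapeOf_append_blank T.blank (_ ++ [(T.δ q z).2.1])]
      simp
    · simp only [psi1inv, KTM.nextConfig, hz]
    · rintro ⟨j, hj⟩
      simp only [List.length_append, List.length_cons, List.length_nil] at hj
      simp only [List.get_eq_getElem, List.getElem_append]
      split_ifs with h
      · exact hk1 j h
      · obtain ⟨i, rfl⟩ := Nat.exists_eq_add_of_le (not_lt.mp h)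
        simp only [Nat.add_sub_cancel_left]
        rcases i with _ | _ | i
        · rfl
        · rfl
        · omega
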